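/- For every starting state i ∈ N_P, the probability that the chain started at i leaves the pseudosink N_P within its first ⌊ε^{−1/2}⌋ steps — namely the sum, over all m < ⌊ε^{−1/2}⌋, all (x,y) ∈ O, and all paths i = v₀, …, v_m = x with every v_j ∈ N_P, of (Π_{j<m} P(ε) v_j v_{j+1}) · P(ε) x y — tends to 0 as ε → 0⁺. -/

import Mathlib

/-!
Since `NP` is closed under regular edges, every edge `(x, y)` leaving it has `r x y = 0`, hence
`P(ε) x y = ε * c x y`. For small `ε ≥ 0` the matrix `P(ε)` is nonnegative and row-stochastic, so
the weights of the paths of a fixed length started at `i` sum to at most `1`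
(`sum_pathWeight_cons_le_one`). Each of the `T` time steps therefore contributes at most
`ε * C`, where `C` is the sum of `c` over the outgoing edges, and `T = ⌊1 / √ε⌋` gives a total of
at most `C * √ε`.
-/

open Filter Topology
open scoped Classical

noncomputable section

/-- Product of transition weights along a path (given as the list of visited states). -/
def pathWeight {W : Type*} (M : W → W → ℝ) (l : List W) : ℝ :=
  ((l.zip l.tail).map fun p => M p.1 p.2).prod

/-- Row sums `t i = Σ_j c i j` of the ε-coefficients. -/
def rowT {V : Type*} [Fintype V] (c : V → V → ℝ) (i : V) : ℝ := ∑ j, c i j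

/-- The transition matrix `P(ε) i j = (1 − ε·t i)·r i j + ε·c i j` of the ε-Markov chain. -/
def Pmat {V : Type*} [Fintype V] (r c : V → V → ℝ) (ε : ℝ) (i j : V) : ℝ :=
  (1 - ε * rowT c i) * r i j + ε * c i j

/-- A regular edge of the ε-Markov chain: positive regular coefficient. -/
def RegEdge {V : Type*} (r : V → V → ℝ) (a b : V) : Prop := 0 < r a b

/-- An ε-edge of the ε-Markov chain: zero regular coefficient, positive ε-coefficient. -/
def EpsEdge {V : Type*} (r c : V → V → ℝ) (a b : V) : Prop := r a b = 0 ∧ 0 < c a b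

/-- An rSCC: an equivalence class of mutual reachability via regular edges. -/
def IsRSCC {V : Type*} (r : V → V → ℝ) (N : Set V) : Prop :=
  ∃ i, N = {j | Relation.ReflTransGen (RegEdge r) i j ∧ Relation.ReflTransGen (RegEdge r) j i}

/-- A pseudosink: an rSCC disjoint from `A`, with no regular edge leaving it,
but with at least one outgoing ε-edge. -/
def IsPseudosink {V : Type*} (r c : V → V → ℝ) (A N : Set V) : Prop :=
  IsRSCC r N ∧ (∀ x ∈ N, x ∉ A) ∧ (∀ x ∈ N, ∀ y, RegEdge r x y → y ∈ N) ∧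
  ∃ x ∈ N, ∃ y, y ∉ N ∧ EpsEdge r c x y

/-- The probability that the chain started at `i` leaves the pseudosink `N_P` within its
first `T` steps: the sum, over all `m < T`, all outgoing ε-edges `(x,y)` of `N_P`, and
all paths `i = v₀, …, v_m = x` with every `v_j ∈ N_P`, of
`(Π_{j<m} P(ε) v_j v_{j+1}) · P(ε) x y`. -/
def earlyExitProb {V : Type*} [Fintype V] (r c : V → V → ℝ) (NP : Set V) (i : V)
    (ε : ℝ) (T : ℕ) : ℝ :=
  ∑ m ∈ Finset.range T,
    ∑ p ∈ Finset.univ.filter (fun p : V × V => p.1 ∈ NP ∧ p.2 ∉ NP ∧ 0 < c p.1 p.2),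
      (∑' l : {l : List V // l.length = m + 1 ∧ l.head? = some i ∧
          l.getLast? = some p.1 ∧ ∀ v ∈ l, v ∈ NP},
        pathWeight (Pmat r c ε) l.1) * Pmat r c ε p.1 p.2

theorem pathWeight_nonneg {W : Type*} {M : W → W → ℝ} (hM : ∀ a b, 0 ≤ M a b) (l : List W) :
    0 ≤ pathWeight M l := by
  unfold pathWeight
  apply List.prod_nonneg
  intro a ha
  obtain ⟨p, -, rfl⟩ := List.mem_map.1 ha
  exact hM _ _

theorem pathWeight_cons_cons {W : Type*} (M : W → W → ℝ) (a b : W) (l : List W) :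
    pathWeight M (a :: b :: l) = M a b * pathWeight M (b :: l) := by
  simp [pathWeight]

/-- Distinct paths of `m` steps from `i` are disjoint events, so their weights under a stochastic
matrix sum to at most `1`. -/
theorem sum_pathWeight_cons_le_one {V : Type*} [Fintype V] {M : V → V → ℝ}
    (hM : ∀ a b, 0 ≤ M a b) (hM1 : ∀ a, ∑ b, M a b = 1) (m : ℕ) :
    ∀ (i : V) (s : Finset (List V)), (∀ l ∈ s, l.length = m) →
      ∑ l ∈ s, pathWeight M (i :: l) ≤ 1 := by
  induction m with
  | zero =>
    intro i s hs
    have hsub : s ⊆ {[]} := by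
      intro l hl
      simpa using hs l hl
    refine (Finset.sum_le_sum_of_subset_of_nonneg hsub
      fun l _ _ => pathWeight_nonneg hM _).trans ?_
    simp [pathWeight]
  | succ m ih =>
    intro i s hs
    set t : Finset (List V) := s.image List.tail with ht
    have hsub : s ⊆ (Finset.univ ×ˢ t).image (fun q : V × List V => q.1 :: q.2) := by
      intro l hl
      cases l with
      | nil => simpa using hs _ hl
      | cons b l' =>
        refine Finset.mem_image.2 ⟨(b, l'), ?_, rfl⟩
        exact Finset.mem_product.2
          ⟨Finset.mem_univ _, Finset.mem_image.2 ⟨b :: l', hl, rfl⟩⟩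
    have htl : ∀ l ∈ t, l.length = m := by
      intro l hl
      obtain ⟨l', hl', rfl⟩ := Finset.mem_image.1 hl
      simp [hs l' hl']
    calc ∑ l ∈ s, pathWeight M (i :: l)
        ≤ ∑ l ∈ (Finset.univ ×ˢ t).image (fun q : V × List V => q.1 :: q.2),
            pathWeight M (i :: l) :=
          Finset.sum_le_sum_of_subset_of_nonneg hsub fun l _ _ => pathWeight_nonneg hM _
      _ = ∑ q ∈ Finset.univ ×ˢ t, pathWeight M (i :: q.1 :: q.2) := by
          apply Finset.sum_image
          rintro ⟨a, l⟩ - ⟨b, l'⟩ - h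
          simpa using h
      _ = ∑ b, M i b * ∑ l ∈ t, pathWeight M (b :: l) := by
          rw [Finset.sum_product]
          simp only [pathWeight_cons_cons, Finset.mul_sum]
      _ ≤ ∑ b, M i b * 1 :=
          Finset.sum_le_sum fun b _ => mul_le_mul_of_nonneg_left (ih b t htl) (hM i b)
      _ = 1 := by simp [hM1]

theorem tsum_pathWeight_le_one {V : Type*} [Fintype V] {M : V → V → ℝ}
    (hM : ∀ a b, 0 ≤ M a b) (hM1 : ∀ a, ∑ b, M a b = 1) (m : ℕ) (i x : V) (N : Set V) :
    ∑' l : {l : List V // l.length = m + 1 ∧ l.head? = some i ∧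
          l.getLast? = some x ∧ ∀ v ∈ l, v ∈ N}, pathWeight M l.1 ≤ 1 := by
  refine tsum_le_of_sum_le' zero_le_one fun s => ?_
  have key : ∀ l : {l : List V // l.length = m + 1 ∧ l.head? = some i ∧
      l.getLast? = some x ∧ ∀ v ∈ l, v ∈ N}, l.1 = i :: l.1.tail := by
    rintro ⟨l, -, h, -⟩
    exact (List.cons_head?_tail h).symm
  have hinj : Set.InjOn (fun l : {l : List V // l.length = m + 1 ∧ l.head? = some i ∧
      l.getLast? = some x ∧ ∀ v ∈ l, v ∈ N} => l.1.tail) s := by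
    intro a _ b _ hab
    apply Subtype.ext
    rw [key a, key b]
    exact congrArg (List.cons i) hab
  calc ∑ l ∈ s, pathWeight M l.1 = ∑ l ∈ s, pathWeight M (i :: l.1.tail) :=
        Finset.sum_congr rfl fun l _ => congrArg _ (key l)
    _ = ∑ l ∈ s.image (fun l => l.1.tail), pathWeight M (i :: l) :=
        (Finset.sum_image (f := fun l => pathWeight M (i :: l)) hinj).symm
    _ ≤ 1 := by
        apply sum_pathWeight_cons_le_one hM hM1 m
        intro l hl
        obtain ⟨l', -, rfl⟩ := Finset.mem_image.1 hl
        simp [l'.2.1]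

theorem Pmat_nonneg {V : Type*} [Fintype V] {r c : V → V → ℝ} (hr0 : ∀ i j, 0 ≤ r i j)
    (hc0 : ∀ i j, 0 ≤ c i j) {ε : ℝ} (hε : 0 ≤ ε) (hε1 : ∀ i, ε * rowT c i ≤ 1) (i j : V) :
    0 ≤ Pmat r c ε i j :=
  add_nonneg (mul_nonneg (sub_nonneg.2 (hε1 i)) (hr0 i j)) (mul_nonneg hε (hc0 i j))

theorem sum_Pmat {V : Type*} [Fintype V] {r c : V → V → ℝ} (hr1 : ∀ i, ∑ j, r i j = 1)
    (ε : ℝ) (i : V) : ∑ j, Pmat r c ε i j = 1 := by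
  simp only [Pmat, Finset.sum_add_distrib, ← Finset.mul_sum, hr1, rowT]
  ring

/-- the probability that the chain started at `i ∈ N_P` leaves the
pseudosink `N_P` within its first `⌊ε^{−1/2}⌋` steps tends to `0` as `ε → 0⁺`. -/
theorem earlyExitProb_tendsto_zero
    {V : Type*} [Fintype V] (r c : V → V → ℝ) (A : Set V)
    (hr0 : ∀ i j, 0 ≤ r i j) (hr1 : ∀ i, ∑ j, r i j = 1)
    (hc0 : ∀ i j, 0 ≤ c i j)
    (hAr : ∀ i ∈ A, r i i = 1) (hAc : ∀ i ∈ A, ∀ j, c i j = 0)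
    (NP : Set V) (hNP : IsPseudosink r c A NP)
    (hQ : ∀ i ∈ NP, ∑ j ∈ Finset.univ.filter (· ∈ NP), r i j = 1)
    (hirr : ∀ x ∈ NP, ∀ y ∈ NP,
      Relation.ReflTransGen (fun a b => a ∈ NP ∧ b ∈ NP ∧ 0 < r a b) x y)
    (i : V) (hi : i ∈ NP) :
    Filter.Tendsto (fun ε => earlyExitProb r c NP i ε ⌊1 / Real.sqrt ε⌋₊)
      (𝓝[>] (0:ℝ)) (𝓝 0) := by
  have hout : ∀ x ∈ NP, ∀ y, y ∉ NP → r x y = 0 := fun x hx y hy =>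
    le_antisymm (not_lt.1 fun h => hy (hNP.2.2.1 x hx y h)) (hr0 x y)
  set O := Finset.univ.filter (fun p : V × V => p.1 ∈ NP ∧ p.2 ∉ NP ∧ 0 < c p.1 p.2) with hO
  set C : ℝ := ∑ p ∈ O, c p.1 p.2 with hC
  have hC0 : 0 ≤ C := Finset.sum_nonneg fun p _ => hc0 _ _
  have hpos : ∀ᶠ ε in 𝓝[>] (0:ℝ), 0 < ε := eventually_mem_nhdsWithin
  have hsmall : ∀ᶠ ε in 𝓝[>] (0:ℝ), ∀ k, ε * rowT c k ≤ 1 := by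
    refine eventually_nhdsWithin_of_eventually_nhds (Filter.eventually_all.2 fun k => ?_)
    have h : Tendsto (fun ε : ℝ => ε * rowT c k) (𝓝 0) (𝓝 0) := by
      simpa using (tendsto_id (α := ℝ) (x := 𝓝 0)).mul_const (rowT c k)
    exact h.eventually_le_const zero_lt_one
  have hlim : Tendsto (fun ε : ℝ => C * Real.sqrt ε) (𝓝[>] (0:ℝ)) (𝓝 0) := by
    have h : Continuous fun ε : ℝ => C * Real.sqrt ε := by fun_prop
    simpa using (h.tendsto 0).mono_left nhdsWithin_le_nhds
  refine tendsto_of_tendsto_of_tendsto_of_le_of_le' tendsto_const_nhds hlim ?_ ?_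
  · filter_upwards [hpos, hsmall] with ε hε hε1
    have hM := Pmat_nonneg hr0 hc0 hε.le hε1
    exact Finset.sum_nonneg fun m _ => Finset.sum_nonneg fun p _ =>
      mul_nonneg (tsum_nonneg fun l => pathWeight_nonneg hM _) (hM _ _)
  · filter_upwards [hpos, hsmall] with ε hε hε1
    have hM := Pmat_nonneg hr0 hc0 hε.le hε1
    have hstep : earlyExitProb r c NP i ε ⌊1 / Real.sqrt ε⌋₊ ≤
        ∑ m ∈ Finset.range ⌊1 / Real.sqrt ε⌋₊, ∑ p ∈ O, ε * c p.1 p.2 := by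
      refine Finset.sum_le_sum fun m _ => Finset.sum_le_sum fun p hp => ?_
      have hp' := (Finset.mem_filter.1 hp).2
      have hP : Pmat r c ε p.1 p.2 = ε * c p.1 p.2 := by
        simp [Pmat, hout p.1 hp'.1 p.2 hp'.2.1]
      calc _ ≤ 1 * Pmat r c ε p.1 p.2 := mul_le_mul_of_nonneg_right
            (tsum_pathWeight_le_one hM (sum_Pmat hr1 ε) m i p.1 NP) (hM _ _)
        _ = ε * c p.1 p.2 := by rw [one_mul, hP]
    have hs : 0 < Real.sqrt ε := Real.sqrt_pos.2 hε
    calc earlyExitProb r c NP i ε ⌊1 / Real.sqrt ε⌋₊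
        ≤ (⌊1 / Real.sqrt ε⌋₊ : ℝ) * (ε * C) := by
          simpa [← Finset.mul_sum, hC] using hstep
      _ ≤ (1 / Real.sqrt ε) * (ε * C) :=
          mul_le_mul_of_nonneg_right (Nat.floor_le (by positivity)) (by positivity)
      _ = C * Real.sqrt ε := by
          field_simp
          rw [Real.sq_sqrt hε.le]

end
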